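/- arXiv:1809.01634 — 2 statements merged into one kernel-verified Lean document; each statement's English description precedes it below -/
import Mathlib

section
/- Every computable amenable group admits a modest Følner sequence, i.e. a Følner sequence (F_i) with C(F_i)/|F_i| → 0. -/
/-!
Number the finite subsets of `G`, and let `F n` be the first finite set `A` in this numbering such
that `|gA \ A| ≤ |A| / n` for each of the first `n` elements `g` of `G`. Amenability guarantees
that the search succeeds, so `F` is a Følner sequence, and it is computable because the
multiplication is. Moreover `|F n| ≥ n`: a set `A` with fewer than `n` elements can only qualify if
`gA ⊆ A` for the `n` elements `g`, but then it contains `n` distinct translates of any of its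
points. As `F n` is computed from the `O(log n)` binary digits of `n`, its complexity is negligible
against `|F n|`.
-/

open Filter MeasureTheory
open scoped Pointwise Classical

namespace Brudno

noncomputable section

/-- Complexity of a binary string `x` relative to a partial function `f` :
the minimal length of a `y` with `f y = x`. -/
def CF (f : List Bool →. List Bool) (x : List Bool) : ℕ :=
  sInf { n | ∃ y : List Bool, y.length = n ∧ x ∈ f y }

/-- `u` is an optimal partial computable machine: it is partial computable, and for
every partial computable `f` there is a constant `K` with `C_u x ≤ C_f x + K` for all `x`. -/
def Optimal (u : List Bool →. List Bool) : Prop :=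
  Partrec u ∧ ∀ f : List Bool →. List Bool, Partrec f →
    ∃ K : ℕ, ∀ x y : List Bool, x ∈ f y → CF u x ≤ y.length + K

/-- Kolmogorov complexity of a natural number (relative to the machine `u`),
via the binary representation. -/
def KC (u : List Bool →. List Bool) (n : ℕ) : ℕ := CF u (Nat.bits n)

/-- A fixed computable injective encoding of finite subsets of `ℕ` into `ℕ`
(hence into binary strings). -/
def encFinsetNat (F : Finset ℕ) : ℕ := Encodable.encode (F.sort (· ≤ ·))

variable {G A B : Type}

/-- Encoding of a finite subset of `G`, where `G` has underlying set `ℕ` via `e`. -/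
def encFinset (e : G ≃ ℕ) (F : Finset G) : ℕ := encFinsetNat (F.image e)

/-- The group multiplication is computable on the underlying set `ℕ`. -/
def ComputableMul [Group G] (e : G ≃ ℕ) : Prop :=
  Computable₂ fun m n : ℕ => e (e.symm m * e.symm n)

/-- A Følner sequence: a sequence of (nonempty) finite subsets with
`|gFᵢ \ Fᵢ| / |Fᵢ| → 0` for every `g ∈ G`. -/
def IsFolner [Group G] (F : ℕ → Finset G) : Prop :=
  (∀ i, (F i).Nonempty) ∧
    ∀ g : G,
      Tendsto (fun i => (((F i).image (fun h => g * h) \ F i).card : ℝ) / ((F i).card : ℝ))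
        atTop (nhds 0)

/-- A tempered sequence: `|⋃_{j<i} Fⱼ⁻¹ Fᵢ| ≤ K |Fᵢ|` for all `i`. -/
def Tempered [Group G] (F : ℕ → Finset G) : Prop :=
  ∃ K : ℝ, 0 < K ∧
    ∀ i : ℕ, ((((Finset.range i).biUnion fun j => (F j)⁻¹ * F i)).card : ℝ) ≤ K * ((F i).card : ℝ)

/-- A modest sequence: `C(Fᵢ)/|Fᵢ| → 0`. -/
def Modest (u : List Bool →. List Bool) (e : G ≃ ℕ) (F : ℕ → Finset G) : Prop :=
  Tendsto (fun i => (KC u (encFinset e (F i)) : ℝ) / ((F i).card : ℝ)) atTop (nhds 0)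

/-- The shift action of `G` on `A^G`: `(g • x) h = x (h * g)`. -/
def shift [Group G] (g : G) (x : G → A) : G → A := fun h => x (h * g)

/-- A fixed computable injective encoding of the restriction of `x : G → A` to a finite
subset `F ⊆ G` (a partial map with finite domain), listing the domain in increasing
order of the ℕ-codes. -/
def encRestrict [Encodable A] (e : G ≃ ℕ) (F : Finset G) (x : G → A) : ℕ :=
  Encodable.encode
    (((F.image e).sort (· ≤ ·)).map fun n => (n, Encodable.encode (x (e.symm n))))

/-- Upper asymptotic complexity of `x ∈ A^G` relative to the sequence `F`. -/
def uac [Encodable A] (u : List Bool →. List Bool) (e : G ≃ ℕ) (F : ℕ → Finset G)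
    (x : G → A) : ℝ :=
  limsup (fun i => (KC u (encRestrict e (F i) x) : ℝ) / ((F i).card : ℝ)) atTop

/-- Lower asymptotic complexity of `x ∈ A^G` relative to the sequence `F`. -/
def lac [Encodable A] (u : List Bool →. List Bool) (e : G ≃ ℕ) (F : ℕ → Finset G)
    (x : G → A) : ℝ :=
  liminf (fun i => (KC u (encRestrict e (F i) x) : ℝ) / ((F i).card : ℝ)) atTop

/-- The product topology on `A^G`, `A` being discrete. -/
def prodiscrete (G A : Type) : TopologicalSpace (G → A) :=
  @Pi.topologicalSpace G (fun _ => A) fun _ => ⊥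

/-- The Borel σ-algebra of the prodiscrete topology on `A^G`. -/
def prodisBorel (G A : Type) : MeasurableSpace (G → A) := @borel (G → A) (prodiscrete G A)

/-- A subshift: a closed shift-invariant subset of `A^G`. -/
def IsSubshift [Group G] (X : Set (G → A)) : Prop :=
  @IsClosed (G → A) (prodiscrete G A) X ∧ ∀ g : G, ∀ x ∈ X, shift g x ∈ X

/-- The number of distinct restrictions to `F` of elements of `X`, i.e. `|pr_F(X)|`. -/
def projCount (F : Finset G) (X : Set (G → A)) : ℕ :=
  Nat.card ↥((fun (x : G → A) (g : ↥F) => x ↑g) '' X)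

/-- Shannon entropy (base 2) of the join partition `α^F` (whose atoms are the
cylinders over the finite set `F`), for the measure `μ`. -/
def Hjoin [Fintype A] (μ : @Measure (G → A) (prodisBorel G A)) (F : Finset G) : ℝ :=
  -∑ w : ↥F → A,
      (μ {x : G → A | ∀ g : ↥F, x ↑g = w g}).toReal *
        Real.logb 2 (μ {x : G → A | ∀ g : ↥F, x ↑g = w g}).toReal

/-- Shannon entropy (base 2) of the canonical alphabet partition. -/
def Halpha [Group G] [Fintype A] (μ : @Measure (G → A) (prodisBorel G A)) : ℝ :=
  -∑ a : A, (μ {x : G → A | x 1 = a}).toReal * Real.logb 2 (μ {x : G → A | x 1 = a}).toReal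

/-- `cont` of the restriction of `x` to `F`: the word of values of `x` on `F`,
listed in increasing order of the ℕ-codes of the elements of `F`. -/
def contWord (e : G ≃ ℕ) (F : Finset G) (x : G → A) : List A :=
  ((F.image e).sort (· ≤ ·)).map fun n => x (e.symm n)

/-- A fixed computable injective encoding of words over `A`. -/
def encWord [Encodable A] (w : List A) : ℕ := Encodable.encode w

/-- Frequency of the letter `a` in the word `w`. -/
def freq (w : List A) (a : A) : ℝ :=
  ((w.filter fun b => decide (b = a)).length : ℝ) / (w.length : ℝ)

/-- Shannon entropy (base 2) of the letter-frequency vector of the word `w`. -/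
def wordEntropy [Fintype A] (w : List A) : ℝ :=
  -∑ a : A, freq w a * Real.logb 2 (freq w a)

/-- The binary entropy function `H(p, 1-p)`. -/
def Hbin (p : ℝ) : ℝ := -(p * Real.logb 2 p) - (1 - p) * Real.logb 2 (1 - p)

/-- Normalized Hamming distance between two words (of the same length). -/
def hammingDist (w w' : List A) : ℝ :=
  (((w.zip w').filter fun p => decide (p.1 ≠ p.2)).length : ℝ) / (w.length : ℝ)

end

section Computability

variable {α β : Type*} [Primcodable α] [Primcodable β]

theorem computablePred_comp {p : β → Prop} (hp : ComputablePred p) {f : α → β}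
    (hf : Computable f) : ComputablePred fun a => p (f a) :=
  ⟨fun _ => inferInstance, hp.decide.comp hf⟩

theorem computablePred_and {p q : α → Prop} (hp : ComputablePred p) (hq : ComputablePred q) :
    ComputablePred fun a => p a ∧ q a :=
  ⟨fun _ => inferInstance,
    (Primrec.and.to_comp.comp hp.decide hq.decide).of_eq fun _ => (Bool.decide_and _ _).symm⟩

theorem computable_count {p : α → ℕ → Prop} [∀ a, DecidablePred (p a)]
    (hp : ComputablePred fun a : α × ℕ => p a.1 a.2) {f : α → ℕ} (hf : Computable f) :
    Computable fun a => Nat.count (p a) (f a) := by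
  have hstep : Computable₂ fun (a : α) (q : ℕ × ℕ) => bif decide (p a q.1) then q.2 + 1 else q.2 :=
    (hp.decide.comp (Computable.fst.pair (Computable.fst.comp Computable.snd))).cond
      (Computable.succ.comp (Computable.snd.comp Computable.snd))
      (Computable.snd.comp Computable.snd)
  refine (Computable.nat_rec hf (Computable.const 0) hstep).of_eq fun a => ?_
  induction f a with
  | zero => rfl
  | succ n ih => rw [Nat.count_succ, ← ih]; by_cases h : p a n <;> simp [h]

theorem computablePred_forall_lt {p : α → ℕ → Prop}
    (hp : ComputablePred fun a : α × ℕ => p a.1 a.2) {f : α → ℕ} (hf : Computable f) :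
    ComputablePred fun a => ∀ x < f a, p a x :=
  (computablePred_comp Primrec.eq.computablePred ((computable_count hp hf).pair hf)).of_eq
    fun _ => Nat.count_iff_forall

theorem primrec₂_pow : Primrec₂ fun m n : ℕ => m ^ n :=
  Primrec₂.unpaired'.1 Nat.Primrec.pow

theorem primrecRel_testBit : PrimrecRel fun i n : ℕ => n.testBit i = true :=
  (Primrec.eq.comp
    (Primrec.nat_mod.comp
      (Primrec.nat_div.comp Primrec.snd (primrec₂_pow.comp (Primrec.const 2) Primrec.fst))
      (Primrec.const 2))
    (Primrec.const 1)).of_eq fun _ => by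
    simp only [Nat.testBit_eq_decide_div_mod_eq, decide_eq_true_iff]

theorem bitIndices_eq_filter_range (n : ℕ) : n.bitIndices = (List.range n).filter n.testBit := by
  refine List.SortedLT.eq_of_mem_iff Nat.bitIndices_sorted
    (List.pairwise_lt_range.filter _).sortedLT fun i => ?_
  rw [Nat.mem_bitIndices, List.mem_filter, List.mem_range, iff_and_self]
  exact fun hi => Nat.lt_two_pow_self.trans_le (Nat.ge_two_pow_of_testBit hi)

theorem primrec_bitIndices : Primrec Nat.bitIndices :=
  (primrecRel_testBit.listFilter.comp Primrec.list_range Primrec.id).of_eq fun n => by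
    simp [bitIndices_eq_filter_range]

theorem computable_size : Computable Nat.size := by
  have hlt : ComputablePred fun p : ℕ × ℕ => p.1 < 2 ^ p.2 :=
    (Primrec.nat_lt.comp Primrec.fst
      (primrec₂_pow.comp (Primrec.const 2) Primrec.snd)).computablePred
  refine (Computable.find (P := fun n k => n < 2 ^ k) hlt
    fun n => ⟨n, n.lt_two_pow_self⟩).of_eq fun n => ?_
  rw [Nat.find_eq_iff]
  exact ⟨n.lt_size_self, fun k hk => not_lt.2 (Nat.lt_size.1 hk)⟩

theorem bits_eq_map_testBit (n : ℕ) : n.bits = (List.range n.size).map n.testBit := by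
  refine List.ext_getElem (by simp [Nat.size_eq_bits_len]) fun i hi _ => ?_
  simp [Nat.testBit_eq_inth, List.getI_eq_getElem _ hi]

theorem computable_bits : Computable Nat.bits := by
  have hmap : Primrec₂ fun n k : ℕ => (List.range k).map n.testBit :=
    Primrec.list_map (Primrec.list_range.comp Primrec.snd)
      ((primrecRel_testBit.decide.comp Primrec.snd (Primrec.fst.comp Primrec.fst)).of_eq
        fun _ => by simp)
  exact (hmap.to_comp.comp Computable.id computable_size).of_eq
    fun n => (bits_eq_map_testBit n).symm

theorem primrec₂_bit : Primrec₂ Nat.bit :=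
  (Primrec.nat_add.comp (Primrec.nat_mul.comp (Primrec.const 2) Primrec.snd)
    ((Primrec.dom_bool Bool.toNat).comp Primrec.fst)).of_eq fun p => (Nat.bit_val p.1 p.2).symm

theorem foldr_bit_bits (n : ℕ) : n.bits.foldr Nat.bit 0 = n := by
  induction n using Nat.binaryRec' with
  | zero => simp
  | bit b n h ih => rw [Nat.bits_append_bit n b h, List.foldr_cons, ih]

end Computability

section Complexity

theorem tendsto_size_div_atTop_nhds_zero :
    Tendsto (fun n : ℕ => (n.size : ℝ) / n) atTop (nhds 0) := by
  have hlog : Tendsto (fun n : ℕ => Real.log n / n) atTop (nhds 0) :=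
    Real.isLittleO_log_id_atTop.tendsto_div_nhds_zero.comp tendsto_natCast_atTop_atTop
  have hlim : Tendsto (fun n : ℕ => Real.log n / n / Real.log 2 + 1 / n) atTop (nhds 0) := by
    simpa using (hlog.div_const (Real.log 2)).add tendsto_one_div_atTop_nhds_zero_nat
  refine squeeze_zero (fun n => by positivity) (fun n => ?_) hlim
  have hsize : n.size ≤ Nat.log 2 n + 1 := Nat.size_le.2 (Nat.lt_pow_succ_log_self one_lt_two n)
  calc (n.size : ℝ) / n ≤ (Nat.log 2 n + 1) / n := by gcongr; exact mod_cast hsize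
    _ ≤ (Real.logb 2 n + 1) / n := by gcongr; exact mod_cast Real.natLog_le_logb n 2
    _ = Real.log n / n / Real.log 2 + 1 / n := by rw [Real.logb, add_div, div_right_comm]

theorem Optimal.exists_KC_le_size_add {u : List Bool →. List Bool} (hu : Optimal u) {f : ℕ → ℕ}
    (hf : Computable f) : ∃ K : ℕ, ∀ n, KC u (f n) ≤ n.size + K := by
  have hdecode : Computable fun y : List Bool => y.foldr Nat.bit 0 :=
    (Primrec.list_foldr Primrec.id (Primrec.const 0)
      (primrec₂_bit.comp₂ (Primrec.fst.comp₂ Primrec₂.right)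
        (Primrec.snd.comp₂ Primrec₂.right))).to_comp
  obtain ⟨K, hK⟩ := hu.2 _ (computable_bits.comp (hf.comp hdecode)).partrec
  refine ⟨K, fun n => ?_⟩
  rw [← Nat.size_eq_bits_len]
  exact hK _ _ (by simp [foldr_bit_bits])

theorem Optimal.modest_of_computable {G : Type} {e : G ≃ ℕ} {u : List Bool →. List Bool}
    (hu : Optimal u) {F : ℕ → Finset G} (hF : Computable fun n => encFinset e (F n))
    (hcard : ∀ n, n ≤ (F n).card) : Modest u e F := by
  obtain ⟨K, hK⟩ := hu.exists_KC_le_size_add hF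
  have hlim : Tendsto (fun n : ℕ => (n.size : ℝ) / n + K / n) atTop (nhds 0) := by
    simpa using tendsto_size_div_atTop_nhds_zero.add (tendsto_const_div_atTop_nhds_zero_nat (K : ℝ))
  refine squeeze_zero' (.of_forall fun n => by positivity) ?_ hlim
  filter_upwards [eventually_gt_atTop 0] with n hn
  have hKC : (KC u (encFinset e (F n)) : ℝ) ≤ n.size + K := mod_cast hK n
  have hle : (n : ℝ) ≤ (F n).card := mod_cast hcard n
  rw [← add_div]
  gcongr

end Complexity

section AlmostInvariant

variable {G : Type*} [Group G]

/-- `A` is `(K, 1 / N)`-invariant: it is nonempty and `|gA \ A| ≤ |A| / N` for every `g ∈ K`. The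
inequality is cleared of denominators, so that it is decided by arithmetic in `ℕ`. -/
def IsAlmostInvariant (K : Finset G) (N : ℕ) (A : Finset G) : Prop :=
  A.Nonempty ∧ ∀ g ∈ K, N * (g • A \ A).card ≤ A.card

theorem IsAlmostInvariant.min_le_card {K A : Finset G} {N : ℕ} (hA : IsAlmostInvariant K N A) :
    min K.card N ≤ A.card := by
  by_contra! hlt
  obtain ⟨hKA, hNA⟩ := lt_min_iff.1 hlt
  obtain ⟨a, ha⟩ := hA.1
  have hmaps : ∀ g ∈ K, g * a ∈ A := fun g hg => by
    by_contra hga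
    have hpos : 0 < (g • A \ A).card :=
      Finset.card_pos.2 ⟨g * a, Finset.mem_sdiff.2 ⟨Finset.smul_mem_smul_finset ha, hga⟩⟩
    exact hNA.not_ge ((Nat.le_mul_of_pos_right N hpos).trans (hA.2 g hg))
  exact hKA.not_ge
    (Finset.card_le_card_of_injOn (· * a) hmaps (mul_left_injective a).injOn)

theorem card_smul_sdiff (g : G) (A : Finset G) :
    (g • A \ A).card = (A.filter fun h => g * h ∉ A).card := by
  rw [Finset.sdiff_eq_filter, Finset.smul_finset_def, Finset.filter_image,
    Finset.card_image_of_injective _ (MulAction.injective g)]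
  rfl

end AlmostInvariant

section Folner

variable {G : Type} [Group G]

theorem IsFolner.exists_isAlmostInvariant {F : ℕ → Finset G} (hF : IsFolner F) (K : Finset G)
    (N : ℕ) : ∃ i, IsAlmostInvariant K N (F i) := by
  have hev : ∀ᶠ i in atTop, ∀ g ∈ K, ((g • F i \ F i).card : ℝ) / (F i).card < 1 / (N + 1) := by
    rw [Filter.eventually_all_finset]
    exact fun g _ => (hF.2 g).eventually_lt_const (by positivity)
  obtain ⟨i, hi⟩ := hev.exists
  refine ⟨i, hF.1 i, fun g hg => ?_⟩
  have hpos : (0 : ℝ) < (F i).card := mod_cast (hF.1 i).card_pos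
  have hlt := hi g hg
  rw [div_lt_div_iff₀ hpos (by positivity), one_mul] at hlt
  have hlt' : (g • F i \ F i).card * (N + 1) < (F i).card := mod_cast hlt
  rw [mul_comm]
  exact (Nat.mul_le_mul_left _ N.le_succ).trans hlt'.le

theorem isFolner_of_isAlmostInvariant {K : ℕ → Finset G} {N : ℕ → ℕ} {F : ℕ → Finset G}
    (hK : ∀ g, ∀ᶠ n in atTop, g ∈ K n) (hN : Tendsto N atTop atTop)
    (hF : ∀ n, IsAlmostInvariant (K n) (N n) (F n)) : IsFolner F := by
  refine ⟨fun n => (hF n).1, fun g => ?_⟩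
  refine squeeze_zero' (.of_forall fun n => by positivity) ?_
    (tendsto_one_div_atTop_nhds_zero_nat.comp hN)
  filter_upwards [hK g, hN.eventually_gt_atTop 0] with n hg hpos
  have hcard : (0 : ℝ) < (F n).card := mod_cast (hF n).1.card_pos
  rw [Function.comp_apply, div_le_div_iff₀ hcard (mod_cast hpos), one_mul, mul_comm]
  exact mod_cast (hF n).2 g hg

end Folner

section CodedSets

variable {G : Type*} {e : G ≃ ℕ}

/-- The finite subset of `G` with code `m`: it consists of the elements whose number under `e` is
the position of a binary digit `1` of `m`. It is through these codes that almost invariant sets are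
searched for. -/
def codedSet (e : G ≃ ℕ) (m : ℕ) : Finset G :=
  (Finset.equivBitIndices m).map e.symm.toEmbedding

/-- The first `n` elements of `G` in the enumeration `e`: those under which a set has to be almost
invariant to be accepted at stage `n` of the search. -/
def initialSegment (e : G ≃ ℕ) (n : ℕ) : Finset G :=
  (Finset.range n).map e.symm.toEmbedding

theorem mem_codedSet {m : ℕ} {g : G} : g ∈ codedSet e m ↔ m.testBit (e g) = true := by
  simp [codedSet, Finset.mem_map_equiv]

theorem mem_initialSegment {n : ℕ} {g : G} : g ∈ initialSegment e n ↔ e g < n := by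
  simp [initialSegment, Finset.mem_map_equiv]

theorem card_initialSegment {n : ℕ} : (initialSegment e n).card = n := by
  simp [initialSegment]

theorem codedSet_surjective (e : G ≃ ℕ) : Function.Surjective (codedSet e) :=
  e.symm.finsetCongr.surjective.comp Finset.equivBitIndices.surjective

theorem image_codedSet (e : G ≃ ℕ) (m : ℕ) :
    (codedSet e m).image e = m.bitIndices.toFinset := by
  ext x
  obtain ⟨g, rfl⟩ := e.surjective x
  simp [e.injective.mem_finset_image, mem_codedSet]

theorem card_filter_codedSet (e : G ≃ ℕ) (m : ℕ) (p : ℕ → Prop) :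
    ((codedSet e m).filter fun g => p (e g)).card =
      Nat.count (fun x => m.testBit x = true ∧ p x) m := by
  have himage : ((codedSet e m).filter fun g => p (e g)).image e =
      (Finset.range m).filter fun x => m.testBit x = true ∧ p x := by
    rw [← Finset.filter_filter, ← List.toFinset_range, ← List.toFinset_filter,
      ← bitIndices_eq_filter_range, ← image_codedSet e, Finset.filter_image]
  rw [Nat.count_eq_card_filter_range, ← himage, Finset.card_image_of_injective _ e.injective]

theorem computable_card_filter_codedSet {α : Type*} [Primcodable α] (e : G ≃ ℕ) {f : α → ℕ}
    (hf : Computable f) {p : α → ℕ → Prop} (hp : ComputablePred fun a : α × ℕ => p a.1 a.2) :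
    Computable fun a => ((codedSet e (f a)).filter fun g => p a (e g)).card := by
  have htestBit : ComputablePred fun a : α × ℕ => (f a.1).testBit a.2 = true :=
    computablePred_comp primrecRel_testBit.computablePred
      (Computable.snd.pair (hf.comp Computable.fst))
  exact (computable_count (p := fun a x => (f a).testBit x = true ∧ p a x)
    (computablePred_and htestBit hp) hf).of_eq fun a => (card_filter_codedSet e (f a) (p a)).symm

theorem computable_card_codedSet (e : G ≃ ℕ) : Computable fun m => (codedSet e m).card := by
  simpa only [Finset.filter_true, id] using
    computable_card_filter_codedSet e Computable.id (p := fun _ _ => True)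
      (Primrec.const true).to_comp.computablePred

end CodedSets

section ComputableFolner

variable {G : Type} {e : G ≃ ℕ}

theorem computable_encFinset_codedSet (e : G ≃ ℕ) :
    Computable fun m => encFinset e (codedSet e m) := by
  refine (Primrec.encode.comp primrec_bitIndices).to_comp.of_eq fun m => ?_
  rw [encFinset, encFinsetNat, image_codedSet,
    (List.toFinset_sort (· ≤ ·) Nat.bitIndices_nodup).2 Nat.bitIndices_sorted.sortedLE.pairwise]

theorem ComputableMul.computable₂_card_smul_sdiff [Group G] (he : ComputableMul e) :
    Computable₂ fun x m : ℕ => (e.symm x • codedSet e m \ codedSet e m).card := by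
  have hmem : ComputablePred fun a : (ℕ × ℕ) × ℕ =>
      ¬ a.1.2.testBit (e (e.symm a.1.1 * e.symm a.2)) = true :=
    (computablePred_comp primrecRel_testBit.computablePred
      ((he.comp (Computable.fst.comp Computable.fst) Computable.snd).pair
        (Computable.snd.comp Computable.fst))).not
  refine (computable_card_filter_codedSet e Computable.snd
    (p := fun a y => ¬ a.2.testBit (e (e.symm a.1 * e.symm y)) = true) hmem).of_eq fun a => ?_
  simp only [card_smul_sdiff, mem_codedSet, Equiv.symm_apply_apply]

theorem ComputableMul.computablePred_isAlmostInvariant [Group G] (he : ComputableMul e) :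
    ComputablePred fun a : ℕ × ℕ =>
      IsAlmostInvariant (initialSegment e a.1) a.1 (codedSet e a.2) := by
  let IsMovedLittle (a : ℕ × ℕ) (x : ℕ) : Prop :=
    a.1 * (e.symm x • codedSet e a.2 \ codedSet e a.2).card ≤ (codedSet e a.2).card
  have hcard := computable_card_codedSet e
  have hpos : ComputablePred fun a : ℕ × ℕ => 0 < (codedSet e a.2).card :=
    computablePred_comp Primrec.nat_lt.computablePred
      ((Computable.const 0).pair (hcard.comp Computable.snd))
  have hle : ComputablePred fun a : (ℕ × ℕ) × ℕ => IsMovedLittle a.1 a.2 :=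
    computablePred_comp Primrec.nat_le.computablePred
      ((Primrec.nat_mul.to_comp.comp (Computable.fst.comp Computable.fst)
        (he.computable₂_card_smul_sdiff.comp Computable.snd
          (Computable.snd.comp Computable.fst))).pair
        (hcard.comp (Computable.snd.comp Computable.fst)))
  refine (computablePred_and hpos (computablePred_forall_lt hle Computable.fst)).of_eq fun a => ?_
  rw [IsAlmostInvariant, Finset.card_pos, ← e.symm.forall_congr_right]
  simp only [mem_initialSegment, Equiv.apply_symm_apply, IsMovedLittle]

theorem exists_computable_isFolner [Group G] (he : ComputableMul e)
    (hamen : ∃ F : ℕ → Finset G, IsFolner F) :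
    ∃ F : ℕ → Finset G, IsFolner F ∧ (Computable fun n => encFinset e (F n)) ∧
      ∀ n, n ≤ (F n).card := by
  obtain ⟨F, hF⟩ := hamen
  have hexists : ∀ n, ∃ m, IsAlmostInvariant (initialSegment e n) n (codedSet e m) := fun n => by
    obtain ⟨i, hi⟩ := hF.exists_isAlmostInvariant (initialSegment e n) n
    obtain ⟨m, hm⟩ := codedSet_surjective e (F i)
    exact ⟨m, hm ▸ hi⟩
  have hinv := fun n => Nat.find_spec (hexists n)
  refine ⟨fun n => codedSet e (Nat.find (hexists n)), ?_, ?_, fun n => ?_⟩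
  · refine isFolner_of_isAlmostInvariant (fun g => ?_) tendsto_id hinv
    simpa only [mem_initialSegment] using eventually_gt_atTop (e g)
  · exact (computable_encFinset_codedSet e).comp
      (Computable.find he.computablePred_isAlmostInvariant hexists)
  · simpa only [card_initialSegment, min_self] using (hinv n).min_le_card

end ComputableFolner

/-- Every computable amenable group admits a modest Følner sequence. -/
theorem statement6 {G : Type} [Group G]
    (e : G ≃ ℕ) (hGcomp : ComputableMul e)
    (u : List Bool →. List Bool) (hu : Optimal u)
    (hamen : ∃ F : ℕ → Finset G, IsFolner F) :
    ∃ F : ℕ → Finset G, IsFolner F ∧ Modest u e F := by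
  obtain ⟨F, hF, hcomp, hcard⟩ := exists_computable_isFolner hGcomp hamen
  exact ⟨F, hF, hu.modest_of_computable hcomp hcard⟩

end Brudno
end

section
/- Let G be a finitely generated computable amenable group and S a finite symmetric generating set of G. Let (F_i) be a Følner sequence in G such that every F_i contains the identity 1_G and every F_i is connected in the Cayley graph of (G, S) (i.e. for all g, h ∈ F_i there exist s_1, …, s_m ∈ S with s_m⋯s_1 g = h and with every partial product s_j⋯s_1 g lying in F_i). Then (F_i) is modest, i.e. C(F_i)/|F_i| → 0. -/
open Filter MeasureTheory
open scoped Pointwise Classical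

namespace Brudno

/-! Explore `F` from `1` along the generators, asking at each newly met vertex whether it lies in
`F`. The answers form a binary word with one bit per vertex of `F` and of its outer boundary, and
the zeros are exactly the boundary vertices. By the Følner property zeros are rare, so the word
can be compressed: for each `m`, encoding blocks of `m` ones by a single bit shortens it to about
`|F| / m` bits. The word determines `F`, hence `C(F) ≤ |F| / m + o(|F|)` for every `m`. -/

section Computability

variable {α β σ : Type*} [Primcodable α] [Primcodable β] [Primcodable σ]

theorem computable_list_foldl {f : α → List β} {g : α → σ} {h : α → σ × β → σ}
    (hf : Computable f) (hg : Computable g) (hh : Computable₂ h) :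
    Computable fun a => (f a).foldl (fun s b => h a (s, b)) (g a) := by
  have hstep : Computable₂ fun (a : α) (p : ℕ × σ) =>
      (Option.casesOn (f a)[p.1]? p.2 fun b => h a (p.2, b) : σ) := by
    refine Computable.option_casesOn
      (Computable.list_getElem?.comp (hf.comp .fst) (Computable.fst.comp .snd))
      (Computable.snd.comp .snd) ?_
    exact hh.comp (Computable.fst.comp .fst)
      (((Computable.snd.comp .snd).comp .fst).pair .snd)
  refine (Computable.nat_rec (Computable.list_length.comp hf) hg hstep).of_eq fun a => ?_
  have htake (n : ℕ) : (Nat.rec (g a) (fun k s =>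
      Option.casesOn (f a)[k]? s fun b => h a (s, b)) n : σ) =
        ((f a).take n).foldl (fun s b => h a (s, b)) (g a) := by
    induction n with
    | zero => simp
    | succ n ih =>
      rw [List.take_add_one, List.foldl_append, ← ih]
      cases hn : (f a)[n]? <;> simp [hn]
  rw [htake, List.take_length]

theorem computable_list_flatMap {f : α → List β} (hf : Computable f) :
    Computable fun l : List α => l.flatMap f := by
  have happend : Computable₂ fun (_ : List α) (p : List β × α) => p.1 ++ f p.2 :=
    Computable.list_append.comp (Computable.fst.comp .snd) (hf.comp (Computable.snd.comp .snd))
  exact (computable_list_foldl .id (.const []) happend).of_eq fun _ => List.flatMap_eq_foldl.symm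

theorem computable_list_map {f : α → β} (hf : Computable f) :
    Computable fun l : List α => l.map f :=
  (computable_list_flatMap (Computable.list_cons.comp hf (.const []))).of_eq fun _ =>
    List.map_eq_flatMap.symm

theorem computable_list_map_of_forall_mem {ι : Type*} {f : ι → α → β} {l : List ι}
    (hf : ∀ i ∈ l, Computable (f i)) : Computable fun a => l.map fun i => f i a := by
  induction l with
  | nil => exact .const []
  | cons i l ih =>
    exact Computable.list_cons.comp (hf i List.mem_cons_self)
      (ih fun j hj => hf j (List.mem_cons_of_mem i hj))

theorem primrecRel_list_mem : PrimrecRel fun (a : α) (l : List α) => a ∈ l :=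
  (PrimrecRel.exists_mem_list Primrec.eq).swap.of_eq fun a l => by simp

theorem primrec_bits : Primrec Nat.bits := by
  have hstep : Primrec₂ fun (_ : Unit) (l : List (List Bool)) =>
      if l.length = 0 then some [] else l[l.length / 2]?.map (l.length.bodd :: ·) := by
    have hlen : Primrec fun p : Unit × List (List Bool) => p.2.length :=
      Primrec.list_length.comp .snd
    refine Primrec.ite (Primrec.eq.comp hlen (.const 0)) (.const _) ?_
    refine Primrec.option_map (Primrec.list_getElem?.comp .snd (Primrec.nat_div2.comp hlen)) ?_
    exact Primrec.list_cons.comp (Primrec.nat_bodd.comp (hlen.comp .fst)) .snd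
  refine (Primrec.nat_strong_rec (fun (_ : Unit) n => n.bits) hstep fun _ n => ?_).comp
    (.const ()) .id
  rcases Nat.eq_zero_or_pos n with rfl | hn
  · simp
  have hhalf : n / 2 < n := Nat.div_lt_self hn one_lt_two
  have hbits : n.bits = n.bodd :: (n / 2).bits := by
    obtain ⟨k, rfl | rfl⟩ := Nat.even_or_odd' n
    · have hk : k ≠ 0 := by omega
      simp [Nat.bit0_bits k hk]
    · rw [Nat.bit1_bits, show (2 * k + 1) / 2 = k by omega]
      simp
  simp [hn.ne', hhalf, hbits]

theorem primrec_sort_toFinset : Primrec fun l : List ℕ => l.toFinset.sort (· ≤ ·) := by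
  have hsum : Primrec fun l : List ℕ => l.sum :=
    Primrec.list_foldr .id (.const 0)
      (Primrec.nat_add.comp (Primrec.fst.comp .snd) (Primrec.snd.comp .snd)).to₂
  have hfilter : Primrec fun l : List ℕ => (List.range (l.sum + 1)).filter (· ∈ l) :=
    (primrecRel_list_mem.listFilter).comp (Primrec.list_range.comp (Primrec.succ.comp hsum)) .id
  refine hfilter.of_eq fun l => ?_
  have hmem : ((List.range (l.sum + 1)).filter (· ∈ l)).toFinset = l.toFinset := by
    ext a
    have : a ∈ l → a < l.sum + 1 := fun ha => Nat.lt_succ_of_le (List.le_sum_of_mem ha)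
    simpa only [List.mem_toFinset, List.mem_filter, List.mem_range, decide_eq_true_eq,
      and_iff_right_iff_imp]
  rw [← hmem, (List.toFinset_sort _ (List.nodup_range.filter _)).2
    (List.pairwise_le_range.filter _)]

theorem computable_encFinsetNat_image [DecidableEq α] {f : α → ℕ} (hf : Computable f) :
    Computable fun l : List α => encFinsetNat (l.toFinset.image f) := by
  refine ((Primrec.encode.comp primrec_sort_toFinset).to_comp.comp (computable_list_map hf)).of_eq
    fun l => ?_
  have himage : (l.map f).toFinset = l.toFinset.image f := by
    ext
    simp
  rw [himage, encFinsetNat]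

end Computability

section RunLengthCode

/-- One step of `runDecode m`. The flag records that the previous bit was the marker `false`, in
which case the current bit is copied literally; an unmarked `true` stands for a block of `m` ones.
-/
def runDecodeStep (m : ℕ) (s : Bool × List Bool) (b : Bool) : Bool × List Bool :=
  bif s.1 then (false, s.2 ++ [b])
  else bif b then (false, s.2 ++ List.replicate m true) else (true, s.2)

/-- The decoder of a binary code adapted to words with few zeros: `true` stands for `m` ones and
`false, b` for the single bit `b`. -/
def runDecode (m : ℕ) (y : List Bool) : List Bool :=
  (y.foldl (runDecodeStep m) (false, [])).2

/-- The encoder of the code read by `runDecode m`. Its first argument counts the ones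
already read that have not yet been emitted. -/
def runEncode (m : ℕ) : ℕ → List Bool → List Bool
  | r, [] => (List.replicate r [false, true]).flatten
  | r, true :: w => if r + 1 = m then true :: runEncode m 0 w else runEncode m (r + 1) w
  | r, false :: w => (List.replicate r [false, true]).flatten ++ false :: false :: runEncode m 0 w

theorem primrec_runDecode (m : ℕ) : Primrec (runDecode m) := by
  have hstep : Primrec fun p : (Bool × List Bool) × Bool => runDecodeStep m p.1 p.2 := by
    have hout : Primrec fun p : (Bool × List Bool) × Bool => p.1.2 := Primrec.snd.comp .fst
    refine Primrec.cond (Primrec.fst.comp .fst) ?_ (Primrec.cond .snd ?_ ?_)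
    · exact (Primrec.const false).pair (Primrec.list_concat.comp hout .snd)
    · exact (Primrec.const false).pair (Primrec.list_append.comp hout (.const _))
    · exact (Primrec.const true).pair hout
  exact Primrec.snd.comp (Primrec.list_foldl .id (.const (false, [])) (hstep.comp .snd).to₂)

theorem foldl_runDecodeStep_literals (m r : ℕ) (out : List Bool) :
    ((List.replicate r [false, true]).flatten).foldl (runDecodeStep m) (false, out) =
      (false, out ++ List.replicate r true) := by
  induction r generalizing out with
  | zero => simp
  | succ r ih => simp [List.replicate_succ, runDecodeStep, ih]

theorem foldl_runDecodeStep_runEncode (m r : ℕ) (w out : List Bool) :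
    (runEncode m r w).foldl (runDecodeStep m) (false, out) =
      (false, out ++ List.replicate r true ++ w) := by
  induction w generalizing r out with
  | nil => simp [runEncode, foldl_runDecodeStep_literals]
  | cons b w ih =>
    cases b with
    | false => simp [runEncode, foldl_runDecodeStep_literals, runDecodeStep, ih]
    | true =>
      by_cases hr : r + 1 = m
      · subst hr
        simp [runEncode, runDecodeStep, ih, List.replicate_succ']
      · simp [runEncode, hr, ih, List.replicate_succ']

theorem runDecode_runEncode (m : ℕ) (w : List Bool) : runDecode m (runEncode m 0 w) = w := by
  simp [runDecode, foldl_runDecodeStep_runEncode]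

theorem length_literals (r : ℕ) : (List.replicate r [false, true]).flatten.length = 2 * r := by
  simp [mul_comm]

theorem mul_length_runEncode_le {m r : ℕ} (hr : r < m) (w : List Bool) :
    m * (runEncode m r w).length ≤ w.length + r + 2 * m ^ 2 * (w.count false + 1) := by
  have hliterals : ∀ {r : ℕ}, r < m → m * (r + 1) ≤ m ^ 2 := fun {r} hr => by
    rw [sq]
    exact Nat.mul_le_mul_left m hr
  induction w generalizing r with
  | nil =>
    simp only [runEncode, length_literals, List.length_nil, List.count_nil]
    linarith [hliterals hr]
  | cons b w ih =>
    have hreset := ih (r := 0) (by omega)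
    cases b with
    | false =>
      simp only [runEncode, List.length_append, length_literals, List.length_cons,
        List.count_cons_self]
      linarith [hliterals hr]
    | true =>
      have hcount : (true :: w).count false = w.count false :=
        List.count_cons_of_ne (by decide)
      by_cases hrm : r + 1 = m
      · simp only [runEncode, hrm, if_true, List.length_cons, hcount]
        linarith
      · have hnext := ih (r := r + 1) (by omega)
        simp only [runEncode, hrm, if_false, List.length_cons, hcount]
        linarith

end RunLengthCode

section Complexity

variable {u : List Bool →. List Bool}

theorem Optimal.exists_KC_le_length_add (hu : Optimal u) {g : List Bool → ℕ}
    (hg : Computable g) : ∃ K : ℕ, ∀ y, KC u (g y) ≤ y.length + K := by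
  obtain ⟨K, hK⟩ := hu.2 (fun y => Part.some (g y).bits) (primrec_bits.to_comp.comp hg).partrec
  exact ⟨K, fun y => hK _ y (Part.mem_some _)⟩

theorem Optimal.exists_mul_KC_le (hu : Optimal u) {g : List Bool → ℕ} (hg : Computable g)
    {m : ℕ} (hm : 0 < m) :
    ∃ K : ℕ, ∀ w, m * KC u (g w) ≤ w.length + 2 * m ^ 2 * w.count false + K := by
  obtain ⟨K, hK⟩ := hu.exists_KC_le_length_add (hg.comp (primrec_runDecode m).to_comp)
  refine ⟨2 * m ^ 2 + m * K, fun w => ?_⟩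
  calc m * KC u (g w) ≤ m * ((runEncode m 0 w).length + K) := by
        have := hK (runEncode m 0 w)
        rw [runDecode_runEncode] at this
        gcongr
    _ ≤ w.length + 2 * m ^ 2 * w.count false + (2 * m ^ 2 + m * K) := by
        linarith [mul_length_runEncode_le hm w]

end Complexity

section Exploration

variable {V : Type*} [DecidableEq V] {nb : V → List V} {o v : V} {F : Finset V}
  {s : List V × List V}

/-- The outer vertex boundary of `F` in the directed graph whose edges lead from each `x` to the
members of `nb x`. -/
def outerBoundary (nb : V → List V) (F : Finset V) : Finset V :=
  (F.biUnion fun x => (nb x).toFinset) \ F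

/-- Connectedness of `F` as seen from `o`: every vertex of `F` is the end of a directed path
in `F` that starts at `o`. -/
def ConnectedFrom (nb : V → List V) (o : V) (F : Finset V) : Prop :=
  o ∈ F ∧ ∀ x ∈ F, Relation.ReflTransGen (fun a b => b ∈ nb a ∧ b ∈ F) o x

/-- The next vertex to be classified by the exploration whose state `s` consists of the list of
accepted and the list of rejected vertices: an unclassified neighbour of an accepted vertex. -/
def nextVertex (nb : V → List V) (s : List V × List V) : Option V :=
  ((s.1.flatMap nb).filter (· ∉ s.1 ++ s.2)).head?

/-- One step of the exploration: accept or reject the next vertex according to the bit `b`. -/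
def exploreStep (nb : V → List V) (s : List V × List V) (b : Bool) : List V × List V :=
  (nextVertex nb s).elim s fun v => bif b then (v :: s.1, s.2) else (s.1, v :: s.2)

/-- The vertices accepted by the exploration from `o` that is driven by the answers `w`. -/
def explore (nb : V → List V) (o : V) (w : List Bool) : List V :=
  (w.foldl (exploreStep nb) ([o], [])).1

/-- The states that occur when the set being explored is `F`. -/
structure IsExplorationState (nb : V → List V) (F : Finset V) (s : List V × List V) : Prop where
  accepted_subset : s.1.toFinset ⊆ F
  accepted_nodup : s.1.Nodup
  rejected_subset : s.2.toFinset ⊆ outerBoundary nb F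
  rejected_nodup : s.2.Nodup

theorem mem_outerBoundary {z : V} :
    z ∈ outerBoundary nb F ↔ (∃ x ∈ F, z ∈ nb x) ∧ z ∉ F := by
  simp [outerBoundary]

theorem nextVertex_eq_none_iff :
    nextVertex nb s = none ↔ ∀ x ∈ s.1, ∀ z ∈ nb x, z ∈ s.1 ∨ z ∈ s.2 := by
  simp only [nextVertex, List.head?_eq_none_iff, List.filter_eq_nil_iff, List.mem_flatMap,
    List.mem_append, decide_eq_true_eq, not_not]
  grind

theorem nextVertex_spec (h : nextVertex nb s = some v) :
    (∃ x ∈ s.1, v ∈ nb x) ∧ v ∉ s.1 ∧ v ∉ s.2 := by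
  simpa using List.mem_of_head? h

theorem exploreStep_of_nextVertex (h : nextVertex nb s = some v) (b : Bool) :
    exploreStep nb s b = bif b then (v :: s.1, s.2) else (s.1, v :: s.2) := by
  rw [exploreStep, h, Option.elim_some]

theorem accepted_subset_exploreStep (b : Bool) : s.1 ⊆ (exploreStep nb s b).1 := by
  cases h : nextVertex nb s <;> cases b <;> simp [exploreStep, h]

theorem length_exploreStep (h : nextVertex nb s = some v) (b : Bool) :
    (exploreStep nb s b).1.length = s.1.length + [b].count true ∧
      (exploreStep nb s b).2.length = s.2.length + [b].count false := by
  cases b <;> simp [exploreStep_of_nextVertex h]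

namespace IsExplorationState

theorem length_accepted_le (hs : IsExplorationState nb F s) : s.1.length ≤ F.card :=
  List.toFinset_card_of_nodup hs.accepted_nodup ▸ Finset.card_le_card hs.accepted_subset

theorem length_rejected_le (hs : IsExplorationState nb F s) :
    s.2.length ≤ (outerBoundary nb F).card :=
  List.toFinset_card_of_nodup hs.rejected_nodup ▸ Finset.card_le_card hs.rejected_subset

theorem accepted_eq (hs : IsExplorationState nb F s) (hF : ConnectedFrom nb o F) (ho : o ∈ s.1)
    (hnext : nextVertex nb s = none) : s.1.toFinset = F := by
  refine hs.accepted_subset.antisymm fun x hx => List.mem_toFinset.2 ?_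
  have hpath := hF.2 x hx
  clear hx
  induction hpath with
  | refl => exact ho
  | tail _ hedge ih =>
    refine (nextVertex_eq_none_iff.1 hnext _ ih _ hedge.1).resolve_right fun hrej => ?_
    exact (mem_outerBoundary.1 (hs.rejected_subset (List.mem_toFinset.2 hrej))).2 hedge.2

theorem step (hs : IsExplorationState nb F s) (h : nextVertex nb s = some v) :
    IsExplorationState nb F (exploreStep nb s (decide (v ∈ F))) := by
  obtain ⟨⟨x, hx, hvx⟩, hv1, hv2⟩ := nextVertex_spec h
  rw [exploreStep_of_nextVertex h]
  by_cases hv : v ∈ F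
  · rw [decide_eq_true hv, cond_true]
    refine { hs with
      accepted_subset := ?_
      accepted_nodup := hs.accepted_nodup.cons hv1 }
    simpa only [List.toFinset_cons] using Finset.insert_subset hv hs.accepted_subset
  · have hvF : v ∈ outerBoundary nb F :=
      mem_outerBoundary.2 ⟨⟨x, hs.accepted_subset (List.mem_toFinset.2 hx), hvx⟩, hv⟩
    rw [decide_eq_false hv, cond_false]
    refine { hs with
      rejected_subset := ?_
      rejected_nodup := hs.rejected_nodup.cons hv2 }
    simpa only [List.toFinset_cons] using Finset.insert_subset hvF hs.rejected_subset

theorem exists_word (hF : ConnectedFrom nb o F) (hs : IsExplorationState nb F s) (ho : o ∈ s.1) :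
    ∃ w : List Bool, (w.foldl (exploreStep nb) s).1.toFinset = F ∧
      w.count true + s.1.length ≤ F.card ∧
      w.count false + s.2.length ≤ (outerBoundary nb F).card := by
  induction hn : F.card + (outerBoundary nb F).card - (s.1.length + s.2.length)
    using Nat.strong_induction_on generalizing s with
  | _ n ih =>
  cases hnext : nextVertex nb s with
  | none =>
    exact ⟨[], hs.accepted_eq hF ho hnext, by simpa using hs.length_accepted_le,
      by simpa using hs.length_rejected_le⟩
  | some v =>
    have hs' := hs.step hnext
    obtain ⟨hacc, hrej⟩ := length_exploreStep hnext (decide (v ∈ F))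
    have hbit := List.count_true_add_count_false [decide (v ∈ F)]
    rw [List.length_singleton] at hbit
    have hacc_le := hs'.length_accepted_le
    have hrej_le := hs'.length_rejected_le
    obtain ⟨w, hw, htrue, hfalse⟩ := ih _ (by omega) hs' (accepted_subset_exploreStep _ ho) rfl
    refine ⟨decide (v ∈ F) :: w, hw, ?_, ?_⟩ <;>
      rw [← List.singleton_append, List.count_append] <;> omega

end IsExplorationState

theorem exists_word_explore_eq (hF : ConnectedFrom nb o F) :
    ∃ w : List Bool, (explore nb o w).toFinset = F ∧ w.count true ≤ F.card ∧
      w.count false ≤ (outerBoundary nb F).card := by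
  have hs : IsExplorationState nb F ([o], []) :=
    ⟨by simpa using hF.1, List.nodup_singleton o, by simp, List.nodup_nil⟩
  obtain ⟨w, hw, htrue, hfalse⟩ := hs.exists_word hF (List.mem_singleton_self o)
  exact ⟨w, hw, by omega, by omega⟩

variable [Primcodable V]

theorem computable_nextVertex (hnb : Computable nb) : Computable (nextVertex nb) := by
  have hfilter : Primrec₂ fun l t : List V => l.filter (· ∉ t) :=
    PrimrecRel.listFilter primrecRel_list_mem.not
  exact Primrec.list_head?.to_comp.comp <| hfilter.to_comp.comp
    ((computable_list_flatMap hnb).comp .fst) (Primrec.list_append.to_comp)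

theorem computable_exploreStep (hnb : Computable nb) : Computable₂ (exploreStep nb) := by
  have hacc : Computable fun p : ((List V × List V) × Bool) × V => p.1.1.1 :=
    Computable.fst.comp (Computable.fst.comp .fst)
  have hrej : Computable fun p : ((List V × List V) × Bool) × V => p.1.1.2 :=
    Computable.snd.comp (Computable.fst.comp .fst)
  have hclassify : Computable₂ fun (p : (List V × List V) × Bool) (v : V) =>
      bif p.2 then (v :: p.1.1, p.1.2) else (p.1.1, v :: p.1.2) :=
    Computable.cond (Computable.snd.comp .fst)
      ((Computable.list_cons.comp .snd hacc).pair hrej)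
      (hacc.pair (Computable.list_cons.comp .snd hrej))
  refine (Computable.option_casesOn ((computable_nextVertex hnb).comp .fst) .fst
    hclassify).of_eq fun p => ?_
  rw [exploreStep]
  cases nextVertex nb p.1 <;> rfl

theorem computable_explore (hnb : Computable nb) (o : V) : Computable (explore nb o) :=
  have hstep : Computable₂ fun (_ : List Bool) (p : (List V × List V) × Bool) =>
      exploreStep nb p.1 p.2 :=
    (computable_exploreStep hnb).comp (Computable.fst.comp .snd) (Computable.snd.comp .snd)
  Computable.fst.comp (computable_list_foldl .id (.const ([o], [])) hstep)

end Exploration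

section ComplexityOfConnectedSets

theorem Optimal.exists_mul_KC_image_le {u : List Bool →. List Bool} (hu : Optimal u)
    {V : Type*} [Primcodable V] [DecidableEq V] {nb : V → List V} (hnb : Computable nb)
    {e : V → ℕ} (he : Computable e) (o : V) {m : ℕ} (hm : 0 < m) :
    ∃ K : ℕ, ∀ F : Finset V, ConnectedFrom nb o F →
      m * KC u (encFinsetNat (F.image e)) ≤
        F.card + (1 + 2 * m ^ 2) * (outerBoundary nb F).card + K := by
  obtain ⟨K, hK⟩ :=
    hu.exists_mul_KC_le ((computable_encFinsetNat_image he).comp (computable_explore hnb o)) hm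
  refine ⟨K, fun F hF => ?_⟩
  obtain ⟨w, hw, htrue, hfalse⟩ := exists_word_explore_eq hF
  have hlength : w.length = w.count true + w.count false :=
    (List.count_true_add_count_false w).symm
  calc m * KC u (encFinsetNat (F.image e))
      ≤ w.length + 2 * m ^ 2 * w.count false + K := by simpa only [hw] using hK w
    _ = w.count true + (1 + 2 * m ^ 2) * w.count false + K := by rw [hlength]; ring
    _ ≤ F.card + (1 + 2 * m ^ 2) * (outerBoundary nb F).card + K := by gcongr

theorem tendsto_div_zero_of_mul_le {ι : Type*} {l : Filter ι} {a b d : ι → ℝ} (ha : ∀ i, 0 ≤ a i)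
    (hb : Tendsto b l atTop) (hd : Tendsto (fun i => d i / b i) l (nhds 0))
    (h : ∀ m : ℕ, 0 < m → ∃ c K : ℝ, ∀ i, m * a i ≤ b i + c * d i + K) :
    Tendsto (fun i => a i / b i) l (nhds 0) := by
  have hpos := hb.eventually_gt_atTop 0
  refine tendsto_order.2 ⟨fun ε hε => ?_, fun ε hε => ?_⟩
  · filter_upwards [hpos] with i hi
    exact hε.trans_le (div_nonneg (ha i) hi.le)
  · obtain ⟨m, hm⟩ := exists_nat_gt (2 / ε)
    have hm0 : (0 : ℝ) < m := (by positivity : 0 < 2 / ε).trans hm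
    obtain ⟨c, K, hcK⟩ := h m (by exact_mod_cast hm0)
    have herror : Tendsto (fun i => c * (d i / b i) + K / b i) l (nhds 0) := by
      simpa using (hd.const_mul c).add (hb.const_div_atTop K)
    filter_upwards [hpos, herror.eventually_lt_const one_pos] with i hi herr
    have hma : m * (a i / b i) < m * ε :=
      calc m * (a i / b i) ≤ 1 + (c * (d i / b i) + K / b i) := by
            have := hcK i
            field_simp
            linarith
        _ < 2 := by linarith
        _ < m * ε := (div_lt_iff₀ hε).1 hm
    exact lt_of_mul_lt_mul_left hma hm0.le

theorem Optimal.tendsto_KC_div_card {u : List Bool →. List Bool} (hu : Optimal u)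
    {V ι : Type*} [Primcodable V] [DecidableEq V] {nb : V → List V} (hnb : Computable nb)
    {e : V → ℕ} (he : Computable e) {o : V} {l : Filter ι} {F : ι → Finset V}
    (hF : ∀ i, ConnectedFrom nb o (F i)) (hcard : Tendsto (fun i => (F i).card) l atTop)
    (hboundary : Tendsto (fun i => ((outerBoundary nb (F i)).card : ℝ) / (F i).card) l (nhds 0)) :
    Tendsto (fun i => (KC u (encFinsetNat ((F i).image e)) : ℝ) / (F i).card) l (nhds 0) := by
  refine tendsto_div_zero_of_mul_le (fun i => Nat.cast_nonneg _)
    (tendsto_natCast_atTop_atTop.comp hcard) hboundary fun m hm => ?_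
  obtain ⟨K, hK⟩ := hu.exists_mul_KC_image_le hnb he o hm
  exact ⟨1 + 2 * m ^ 2, K, fun i => by exact_mod_cast hK (F i) (hF i)⟩

end ComplexityOfConnectedSets

section Folner

variable {G : Type} [Group G] {F : ℕ → Finset G}

/-- The neighbours of `g` in the Cayley graph of `S` acting by left multiplication. -/
noncomputable def leftNeighbors (S : Finset G) (g : G) : List G :=
  S.toList.map (· * g)

theorem mem_leftNeighbors {S : Finset G} {g h : G} :
    h ∈ leftNeighbors S g ↔ ∃ s ∈ S, s * g = h := by
  simp [leftNeighbors]

theorem outerBoundary_leftNeighbors (S F : Finset G) :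
    outerBoundary (leftNeighbors S) F = S.biUnion fun s => F.image (s * ·) \ F := by
  ext z
  simp only [mem_outerBoundary, mem_leftNeighbors, Finset.mem_biUnion, Finset.mem_sdiff,
    Finset.mem_image]
  tauto

theorem connectedFrom_leftNeighbors {S F : Finset G} {o : G} (ho : o ∈ F)
    (hpath : ∀ g ∈ F, ∃ (n : ℕ) (c : ℕ → G),
      c 0 = o ∧ c n = g ∧ (∀ k ≤ n, c k ∈ F) ∧ ∀ k < n, ∃ s ∈ S, c (k + 1) = s * c k) :
    ConnectedFrom (leftNeighbors S) o F := by
  refine ⟨ho, fun g hg => ?_⟩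
  obtain ⟨n, c, rfl, rfl, hcF, hstep⟩ := hpath g hg
  refine (reflTransGen_of_succ_of_le (fun i j => c j ∈ leftNeighbors S (c i) ∧ c j ∈ F)
    (fun k hk => ⟨?_, hcF _ hk.2⟩) (Nat.zero_le n)).lift c fun _ _ h => h
  obtain ⟨s, hs, hck⟩ := hstep k hk.2
  exact mem_leftNeighbors.2 ⟨s, hs, hck.symm⟩

theorem IsFolner.tendsto_card_outerBoundary_div (hF : IsFolner F) (S : Finset G) :
    Tendsto (fun i => ((outerBoundary (leftNeighbors S) (F i)).card : ℝ) / (F i).card) atTop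
      (nhds 0) := by
  have hsum : Tendsto (fun i => ∑ s ∈ S, (((F i).image (s * ·) \ F i).card : ℝ) / (F i).card)
      atTop (nhds 0) := by
    simpa using tendsto_finsetSum S fun s _ => hF.2 s
  refine squeeze_zero (fun i => by positivity) (fun i => ?_) hsum
  rw [← Finset.sum_div, outerBoundary_leftNeighbors]
  gcongr
  exact_mod_cast Finset.card_biUnion_le

theorem IsFolner.tendsto_card_atTop [Infinite G] (hF : IsFolner F) :
    Tendsto (fun i => (F i).card) atTop atTop := by
  refine tendsto_atTop.2 fun n => ?_
  obtain ⟨X, hX⟩ := Infinite.exists_subset_card_eq G n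
  have hsmall : ∀ᶠ i in atTop, ∀ g ∈ X,
      (((F i).image (g * ·) \ F i).card : ℝ) / (F i).card < 1 / (n + 1) :=
    (eventually_all_finset X).2 fun g _ => (hF.2 g).eventually_lt_const (by positivity)
  filter_upwards [hsmall] with i hi
  by_contra! hlt
  obtain ⟨x, hx⟩ := hF.1 i
  have hinvariant : ∀ g ∈ X, (F i).image (g * ·) ⊆ F i := by
    intro g hg
    have hcard : (((F i).image (g * ·) \ F i).card : ℝ) < 1 := by
      have hpos : (0 : ℝ) < (F i).card := by exact_mod_cast Finset.card_pos.2 ⟨x, hx⟩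
      have hle : ((F i).card : ℝ) ≤ n + 1 := by exact_mod_cast hlt.le.trans n.le_succ
      have hratio := hi g hg
      rw [div_lt_iff₀ hpos] at hratio
      refine hratio.trans_le ?_
      rwa [one_div_mul_eq_div, div_le_one (by positivity)]
    rw [Nat.cast_lt_one] at hcard
    rwa [← Finset.sdiff_eq_empty_iff_subset, ← Finset.card_eq_zero]
  have : X.card ≤ (F i).card :=
    Finset.card_le_card_of_injOn (· * x)
      (fun g hg => hinvariant g hg (Finset.mem_image_of_mem _ hx)) (mul_left_injective x).injOn
  omega

theorem computable_leftNeighbors {e : G ≃ ℕ} (hmul : ComputableMul e) (S : Finset G) :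
    letI := Primcodable.ofEquiv ℕ e
    Computable (leftNeighbors S) := by
  let := Primcodable.ofEquiv ℕ e
  have he : Computable e := Primrec.of_equiv.to_comp
  have he_symm : Computable e.symm := Primrec.of_equiv_symm.to_comp
  refine computable_list_map_of_forall_mem fun s _ => ?_
  exact (he_symm.comp (hmul.comp (.const (e s)) he)).of_eq fun g => by simp

end Folner

/-- **geometric criterion for modesty.** Let `G` be a finitely generated
computable amenable group with a finite symmetric generating set `S`. If `(F_i)` is a
Følner sequence such that every `F_i` contains `1` and is connected in the Cayley graph
of `(G, S)`, then `(F_i)` is modest. -/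
theorem statement7 {G : Type} [Group G]
    (e : G ≃ ℕ) (hGcomp : ComputableMul e)
    (u : List Bool →. List Bool) (hu : Optimal u)
    (S : Finset G) (hSsym : ∀ s ∈ S, s⁻¹ ∈ S)
    (hSgen : Subgroup.closure (S : Set G) = ⊤)
    (F : ℕ → Finset G) (hF : IsFolner F)
    (hone : ∀ i, (1 : G) ∈ F i)
    (hconn : ∀ i, ∀ g ∈ F i, ∀ h ∈ F i, ∃ (n : ℕ) (c : ℕ → G),
      c 0 = g ∧ c n = h ∧ (∀ k ≤ n, c k ∈ F i) ∧ ∀ k < n, ∃ s ∈ S, c (k + 1) = s * c k) :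
    Modest u e F := by
  let := Primcodable.ofEquiv ℕ e
  have : Infinite G := e.infinite_iff.2 inferInstance
  exact hu.tendsto_KC_div_card (computable_leftNeighbors hGcomp S) Primrec.of_equiv.to_comp
    (fun i => connectedFrom_leftNeighbors (hone i) (hconn i 1 (hone i)))
    hF.tendsto_card_atTop (hF.tendsto_card_outerBoundary_div S)

end Brudno
end
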